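/- arXiv:1505.07060 — 5 statements merged into one kernel-verified Lean document; each statement's English description precedes it below -/
import Mathlib

section
/- Let μ₁, μ₂, ζ be positive real numbers and let d be a real number with 0 ≤ d < 1, and suppose μ₂/√(1−d) < ζ and ζ < 2μ₁ − μ₂/√(1−d). Then there exists a constant C > 0 such that for all real numbers a ≥ 0 and b ≥ 0, −μ₁·a² + μ₂·a·b + (ζ/2)·a² − (ζ/2)·(1−d)·b² ≤ −C·(a² + b²). -/
/-- Quadratic-form dissipativity estimate for the boundary damping terms:
if `μ₂/√(1−d) < ζ < 2μ₁ − μ₂/√(1−d)`, then there is `C > 0` such that for all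
`a, b ≥ 0`, `−μ₁a² + μ₂ab + (ζ/2)a² − (ζ/2)(1−d)b² ≤ −C(a² + b²)`. -/
theorem quadratic_dissipativity (μ1 μ2 ζ d : ℝ) (hμ1 : 0 < μ1) (hμ2 : 0 < μ2)
    (hζ : 0 < ζ) (hd0 : 0 ≤ d) (hd1 : d < 1)
    (h1 : μ2 / Real.sqrt (1 - d) < ζ)
    (h2 : ζ < 2 * μ1 - μ2 / Real.sqrt (1 - d)) :
    ∃ C : ℝ, 0 < C ∧ ∀ a b : ℝ, 0 ≤ a → 0 ≤ b →
      -μ1 * a ^ 2 + μ2 * a * b + (ζ / 2) * a ^ 2 - (ζ / 2) * (1 - d) * b ^ 2 ≤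
        -C * (a ^ 2 + b ^ 2) := by
  have hs : 0 < Real.sqrt (1 - d) := Real.sqrt_pos.mpr (by linarith)
  have hs2 : Real.sqrt (1 - d) ^ 2 = 1 - d := Real.sq_sqrt (by linarith)
  have hk : 0 < μ2 / Real.sqrt (1 - d) := div_pos hμ2 hs
  have hm : μ2 = μ2 / Real.sqrt (1 - d) * Real.sqrt (1 - d) := by field_simp
  generalize μ2 / Real.sqrt (1 - d) = k at *
  generalize Real.sqrt (1 - d) = s at *
  have hA : 0 < μ1 - ζ / 2 - k / 2 := by linarith
  have hB : 0 < (ζ - k) / 2 * s ^ 2 := mul_pos (by linarith) (by positivity)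
  refine ⟨min (μ1 - ζ / 2 - k / 2) ((ζ - k) / 2 * s ^ 2), lt_min hA hB, ?_⟩
  intro a b _ _
  have e1 := mul_le_mul_of_nonneg_right
    (min_le_left (μ1 - ζ / 2 - k / 2) ((ζ - k) / 2 * s ^ 2)) (sq_nonneg a)
  have e2 := mul_le_mul_of_nonneg_right
    (min_le_right (μ1 - ζ / 2 - k / 2) ((ζ - k) / 2 * s ^ 2)) (sq_nonneg b)
  have e3 := mul_nonneg hk.le (sq_nonneg (a - s * b))
  rw [← hs2, hm]
  linarith
end

section
/- Let w : ℝ → ℝ be continuous with w(s) ≥ 0 for all s, and let τ : ℝ → [0,∞) be differentiable with τ′(t) ≤ 1 for all t. Then the function F(t) = τ(t)·∫₀¹ e^{−2τ(t)ρ} w(t − τ(t)ρ) dρ satisfies F(t) ≥ 0 and F′(t) ≤ −2·F(t) + w(t) for all t. -/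
open intervalIntegral

/-- Damped differential inequality for the exponentially weighted delay functional:
if `w ≥ 0` and `τ ≥ 0` with `τ′ ≤ 1`, then
`F(t) = τ(t)·∫₀¹ e^{−2τ(t)ρ} w(t − τ(t)ρ) dρ` satisfies `F ≥ 0` and
`F′(t) ≤ −2F(t) + w(t)`. -/
theorem weighted_delay_functional_ineq (w : ℝ → ℝ) (hw : Continuous w)
    (hw0 : ∀ s, 0 ≤ w s) (τ : ℝ → ℝ) (hτ0 : ∀ t, 0 ≤ τ t)
    (hτ : Differentiable ℝ τ) (hτ' : ∀ t, deriv τ t ≤ 1) :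
    (∀ t : ℝ, 0 ≤ τ t * ∫ ρ in (0:ℝ)..1, Real.exp (-2 * (τ t * ρ)) * w (t - τ t * ρ)) ∧
    (∀ t : ℝ,
      deriv (fun r => τ r * ∫ ρ in (0:ℝ)..1, Real.exp (-2 * (τ r * ρ)) * w (r - τ r * ρ)) t ≤
        -2 * (τ t * ∫ ρ in (0:ℝ)..1, Real.exp (-2 * (τ t * ρ)) * w (t - τ t * ρ)) + w t) := by
  have hg : Continuous (fun s : ℝ => Real.exp (2 * s) * w s) := by fun_prop
  have hF : ∀ r : ℝ, τ r * (∫ ρ in (0:ℝ)..1, Real.exp (-2 * (τ r * ρ)) * w (r - τ r * ρ)) =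
      Real.exp (-2 * r) * ((∫ s in (0:ℝ)..r, Real.exp (2 * s) * w s)
        - ∫ s in (0:ℝ)..(r - τ r), Real.exp (2 * s) * w s) := by
    intro r
    have h1 : ∀ ρ : ℝ, Real.exp (-2 * (τ r * ρ)) * w (r - τ r * ρ) =
        Real.exp (-2 * r) * (fun s : ℝ => Real.exp (2 * s) * w s) (r - τ r * ρ) := by
      intro ρ
      simp only
      rw [← mul_assoc (Real.exp (-2 * r)), ← Real.exp_add]
      congr 2
      ring
    simp_rw [h1]
    rw [intervalIntegral.integral_const_mul, mul_left_comm,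
      intervalIntegral.mul_integral_comp_sub_mul (f := fun s : ℝ => Real.exp (2 * s) * w s),
      intervalIntegral.integral_interval_sub_left (hg.intervalIntegrable _ _)
        (hg.intervalIntegrable _ _)]
    simp
  refine ⟨fun t => mul_nonneg (hτ0 t) (intervalIntegral.integral_nonneg (by norm_num)
    fun ρ _ => mul_nonneg (Real.exp_pos _).le (hw0 _)), fun t => ?_⟩
  have hG : ∀ x : ℝ, HasDerivAt (fun r : ℝ => ∫ s in (0:ℝ)..r, Real.exp (2 * s) * w s)
      (Real.exp (2 * x) * w x) x := fun x =>
    intervalIntegral.integral_hasDerivAt_right (hg.intervalIntegrable _ _)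
      (hg.stronglyMeasurableAtFilter _ _) hg.continuousAt
  have hd : HasDerivAt (fun r => r - τ r) (1 - deriv τ t) t :=
    (hasDerivAt_id t).sub (hτ t).hasDerivAt
  have h2 : HasDerivAt (fun r : ℝ => ∫ s in (0:ℝ)..(r - τ r), Real.exp (2 * s) * w s)
      (Real.exp (2 * (t - τ t)) * w (t - τ t) * (1 - deriv τ t)) t :=
    HasDerivAt.comp (h₂ := fun r : ℝ => ∫ s in (0:ℝ)..r, Real.exp (2 * s) * w s)
      (h := fun r => r - τ r) t (hG (t - τ t)) hd
  have he : HasDerivAt (fun r : ℝ => Real.exp (-2 * r)) (Real.exp (-2 * t) * (-2 * 1)) t :=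
    ((hasDerivAt_id t).const_mul (-2)).exp
  have h3 := he.mul ((hG t).sub h2)
  rw [hF t, funext hF]
  refine le_of_eq_of_le h3.deriv ?_
  have h5 : Real.exp (-2 * t) * Real.exp (2 * t) = 1 := by
    rw [← Real.exp_add]; simp
  have h6 : 0 ≤ Real.exp (-2 * t) *
      (Real.exp (2 * (t - τ t)) * w (t - τ t) * (1 - deriv τ t)) :=
    mul_nonneg (Real.exp_pos _).le (mul_nonneg (mul_nonneg (Real.exp_pos _).le (hw0 _))
      (by linarith [hτ' t]))
  have h7 : Real.exp (-2 * t) * (Real.exp (2 * t) * w t) = w t := by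
    rw [← mul_assoc, h5, one_mul]
  simp only [Pi.sub_apply]
  rw [mul_sub (Real.exp (-2 * t)) (Real.exp (2 * t) * w t), h7]
  linarith
end

section
/- Let H be a real inner product space, let g : [0,∞) → ℝ be continuous with g(s) ≥ 0 for all s and ∫₀^∞ g(s) ds = 1 − l for some 0 < l ≤ 1, and let f : [0,∞) → H be continuous. Then for every t ≥ 0 and every δ > 0, ⟨f(t), ∫₀ᵗ g(t−s)·f(s) ds⟩ ≤ (δ + 1 − l)·‖f(t)‖² + ((1 − l)/(4δ))·∫₀ᵗ g(t−s)·‖f(t) − f(s)‖² ds. -/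
open intervalIntegral RealInnerProductSpace

/-- Estimate for the convolution term in the derivative of the Lyapunov functional ψ:
`⟨f(t), ∫₀ᵗ g(t−s) f(s) ds⟩ ≤ (δ + 1 − l)‖f(t)‖² + ((1−l)/(4δ))·∫₀ᵗ g(t−s)‖f(t)−f(s)‖² ds`. -/
theorem convolution_inner_estimate {H : Type*} [NormedAddCommGroup H] [InnerProductSpace ℝ H]
    (g : ℝ → ℝ) (hgc : ContinuousOn g (Set.Ici 0)) (hg0 : ∀ s, 0 ≤ s → 0 ≤ g s)
    (l : ℝ) (hl0 : 0 < l) (hl1 : l ≤ 1)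
    (hgint : MeasureTheory.IntegrableOn g (Set.Ioi 0))
    (hgval : ∫ s in Set.Ioi (0:ℝ), g s = 1 - l)
    (f : ℝ → H) (hf : Continuous f) (t : ℝ) (ht : 0 ≤ t) (δ : ℝ) (hδ : 0 < δ) :
    ⟪f t, ∫ s in (0:ℝ)..t, g (t - s) • f s⟫ ≤
      (δ + 1 - l) * ‖f t‖ ^ 2 +
        ((1 - l) / (4 * δ)) * ∫ s in (0:ℝ)..t, g (t - s) * ‖f t - f s‖ ^ 2 := by
  have hm : 0 ≤ 1 - l := by linarith
  have hJ : 0 ≤ ∫ s in (0:ℝ)..t, g (t - s) * ‖f t - f s‖ ^ 2 := by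
    apply intervalIntegral.integral_nonneg ht
    intro s hs
    exact mul_nonneg (hg0 _ (by linarith [hs.2])) (by positivity)
  by_cases hc : CompleteSpace H
  swap
  · have h0 : ∫ s in (0:ℝ)..t, g (t - s) • f s = 0 := by
      simp [intervalIntegral, MeasureTheory.integral, hc]
    rw [h0, inner_zero_right]
    have h1 : 0 ≤ δ + 1 - l := by linarith
    positivity
  have hk : ContinuousOn (fun s => g (t - s)) (Set.uIcc 0 t) := by
    rw [Set.uIcc_of_le ht]
    refine hgc.comp (by fun_prop) ?_
    intro s hs
    simp only [Set.mem_Ici]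
    linarith [hs.2]
  have hG : ∫ s in (0:ℝ)..t, g (t - s) ≤ 1 - l := by
    rw [intervalIntegral.integral_comp_sub_left (fun s => g s) t, sub_self, sub_zero,
      intervalIntegral.integral_of_le ht, ← hgval]
    refine MeasureTheory.setIntegral_mono_set hgint ?_ ?_
    · filter_upwards [MeasureTheory.ae_restrict_mem measurableSet_Ioi] with s hs
      exact hg0 s (le_of_lt hs)
    · exact (show Set.Ioc 0 t ⊆ Set.Ioi 0 from fun s hs => hs.1).eventuallyLE
  have hI1 : IntervalIntegrable (fun s => g (t - s) • f s) MeasureTheory.volume 0 t :=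
    (hk.smul hf.continuousOn).intervalIntegrable
  have hkI := hk.intervalIntegrable (μ := MeasureTheory.volume)
  have hI2 : IntervalIntegrable (fun s => g (t - s) * ‖f t - f s‖ ^ 2)
      MeasureTheory.volume 0 t :=
    (hk.mul (by fun_prop)).intervalIntegrable
  have hI3 : IntervalIntegrable (fun s => g (t - s) * ⟪f t, f s⟫)
      MeasureTheory.volume 0 t :=
    (hk.mul (by fun_prop)).intervalIntegrable
  have hin : ⟪f t, ∫ s in (0:ℝ)..t, g (t - s) • f s⟫
      = ∫ s in (0:ℝ)..t, g (t - s) * ⟪f t, f s⟫ := by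
    have := (innerSL ℝ (f t)).intervalIntegral_comp_comm hI1
    simp only [innerSL_apply_apply, inner_smul_right] at this
    exact this.symm
  rw [hin]
  set J := ∫ s in (0:ℝ)..t, g (t - s) * ‖f t - f s‖ ^ 2 with hJd
  have key : ∀ M : ℝ, 0 < M → 1 - l ≤ M →
      ∫ s in (0:ℝ)..t, g (t - s) * ⟪f t, f s⟫ ≤
        (δ + 1 - l) * ‖f t‖ ^ 2 + (M / (4 * δ)) * J := by
    intro M hM hlM
    have h1 : ∫ s in (0:ℝ)..t, g (t - s) * ⟪f t, f s⟫ ≤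
        ∫ s in (0:ℝ)..t, (g (t - s) * ((1 + δ / M) * ‖f t‖ ^ 2)
          + (M / (4 * δ)) * (g (t - s) * ‖f t - f s‖ ^ 2)) := by
      refine intervalIntegral.integral_mono_on ht hI3
        ((hkI.mul_const _).add (hI2.const_mul _)) ?_
      intro s hs
      have hgs := hg0 (t - s) (by linarith [hs.2])
      have h2 : ⟪f t, f s⟫ ≤ ‖f t‖ ^ 2 + ‖f t‖ * ‖f t - f s‖ := by
        have h3 : ⟪f t, f s⟫ = ‖f t‖ ^ 2 - ⟪f t, f t - f s⟫ := by
          rw [inner_sub_right, real_inner_self_eq_norm_sq]; ring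
        have h4 := neg_le_of_abs_le (abs_real_inner_le_norm (f t) (f t - f s))
        linarith
      have h5 : ‖f t‖ * ‖f t - f s‖ ≤ δ / M * ‖f t‖ ^ 2 + M / (4 * δ) * ‖f t - f s‖ ^ 2 := by
        have h6 : δ / M * ‖f t‖ ^ 2 + M / (4 * δ) * ‖f t - f s‖ ^ 2 - ‖f t‖ * ‖f t - f s‖
            = (2 * δ * ‖f t‖ - M * ‖f t - f s‖) ^ 2 / (4 * δ * M) := by
          field_simp
          ring
        have h7 : 0 ≤ (2 * δ * ‖f t‖ - M * ‖f t - f s‖) ^ 2 / (4 * δ * M) := by positivity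
        linarith
      have h8 := mul_le_mul_of_nonneg_left (h2.trans (add_le_add_right h5 (‖f t‖ ^ 2))) hgs
      refine h8.trans (le_of_eq ?_)
      ring
    rw [intervalIntegral.integral_add (hkI.mul_const _) (hI2.const_mul _),
      intervalIntegral.integral_mul_const, intervalIntegral.integral_const_mul, ← hJd] at h1
    have h9 : (1 - l) * (1 + δ / M) ≤ δ + 1 - l := by
      have : (1 - l) * (δ / M) ≤ M * (δ / M) :=
        mul_le_mul_of_nonneg_right hlM (by positivity)
      rw [mul_div_cancel₀ _ hM.ne'] at this
      linarith
    have h10 : (∫ s in (0:ℝ)..t, g (t - s)) * ((1 + δ / M) * ‖f t‖ ^ 2)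
        ≤ (1 - l) * ((1 + δ / M) * ‖f t‖ ^ 2) :=
      mul_le_mul_of_nonneg_right hG (by positivity)
    have h11 := mul_le_mul_of_nonneg_right h9 (sq_nonneg ‖f t‖)
    linarith
  apply le_of_forall_pos_le_add
  intro η hη
  have h := key (1 - l + η * (4 * δ) / (J + 1)) (by positivity)
    (by have : 0 ≤ η * (4 * δ) / (J + 1) := by positivity
        linarith)
  have h12 : (1 - l + η * (4 * δ) / (J + 1)) / (4 * δ) * J
      = (1 - l) / (4 * δ) * J + η * (J / (J + 1)) := by
    field_simp
  have h13 : η * (J / (J + 1)) ≤ η * 1 := by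
    apply mul_le_mul_of_nonneg_left _ hη.le
    rw [div_le_one (by positivity)]
    linarith
  linarith
end

section
/- Let H be a real inner product space, let g : [0,∞) → ℝ be continuous with g(s) ≥ 0 for all s and ∫₀^∞ g(s) ds = 1 − l for some 0 < l ≤ 1, and let f : [0,∞) → H be continuous. Then for every t ≥ 0 and every δ > 0, −⟨∫₀ᵗ g(t−s)·f(s) ds, ∫₀ᵗ g(t−s)·(f(t) − f(s)) ds⟩ ≤ 2δ(1−l)²·‖f(t)‖² + (2δ + 1/(4δ))·(1−l)·∫₀ᵗ g(t−s)·‖f(t) − f(s)‖² ds. -/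
open intervalIntegral RealInnerProductSpace

/-- Estimate for the double convolution term in the derivative of the Lyapunov
functional φ:
`−⟨∫₀ᵗ g(t−s) f(s) ds, ∫₀ᵗ g(t−s)(f(t) − f(s)) ds⟩ ≤ 2δ(1−l)²‖f(t)‖²
  + (2δ + 1/(4δ))(1−l)·∫₀ᵗ g(t−s)‖f(t)−f(s)‖² ds`. -/
theorem double_convolution_estimate {H : Type*} [NormedAddCommGroup H] [InnerProductSpace ℝ H]
    (g : ℝ → ℝ) (hgc : ContinuousOn g (Set.Ici 0)) (hg0 : ∀ s, 0 ≤ s → 0 ≤ g s)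
    (l : ℝ) (hl0 : 0 < l) (hl1 : l ≤ 1)
    (hgint : MeasureTheory.IntegrableOn g (Set.Ioi 0))
    (hgval : ∫ s in Set.Ioi (0:ℝ), g s = 1 - l)
    (f : ℝ → H) (hf : Continuous f) (t : ℝ) (ht : 0 ≤ t) (δ : ℝ) (hδ : 0 < δ) :
    -⟪∫ s in (0:ℝ)..t, g (t - s) • f s, ∫ s in (0:ℝ)..t, g (t - s) • (f t - f s)⟫ ≤
      2 * δ * (1 - l) ^ 2 * ‖f t‖ ^ 2 +
        (2 * δ + 1 / (4 * δ)) * (1 - l) *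
          ∫ s in (0:ℝ)..t, g (t - s) * ‖f t - f s‖ ^ 2 := by
  have hl : 0 ≤ 1 - l := by linarith
  have hgt : ContinuousOn (fun s => g (t - s)) (Set.uIcc 0 t) := by
    refine hgc.comp (by fun_prop) ?_
    intro s hs
    rw [Set.uIcc_of_le ht] at hs
    simpa using hs.2
  have hnn : ∀ s ∈ Set.Icc 0 t, 0 ≤ g (t - s) := fun s hs => hg0 _ (by linarith [hs.2])
  have hcont : ∀ p : ℝ → ℝ, Continuous p →
      IntervalIntegrable (fun s => g (t - s) * p s) MeasureTheory.volume 0 t :=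
    fun p hp => (hgt.mul hp.continuousOn).intervalIntegrable
  have hK0 : 0 ≤ ∫ s in (0:ℝ)..t, g (t - s) * ‖f t - f s‖ ^ 2 :=
    intervalIntegral.integral_nonneg ht fun s hs => mul_nonneg (hnn s hs) (by positivity)
  by_cases hH : CompleteSpace H
  swap
  · have hz : ∀ h : ℝ → H, ∫ s in (0:ℝ)..t, h s = 0 := by
      intro h
      simp [intervalIntegral, MeasureTheory.integral, hH]
    rw [hz, hz, inner_zero_left, neg_zero]
    positivity
  have hG0 : 0 ≤ ∫ s in (0:ℝ)..t, g (t - s) :=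
    intervalIntegral.integral_nonneg ht hnn
  have hG1 : ∫ s in (0:ℝ)..t, g (t - s) ≤ 1 - l := by
    rw [intervalIntegral.integral_comp_sub_left (fun s => g s) t, sub_self, sub_zero,
      intervalIntegral.integral_of_le ht, ← hgval]
    refine MeasureTheory.setIntegral_mono_set hgint ?_ ?_
    · filter_upwards [MeasureTheory.ae_restrict_mem measurableSet_Ioi] with s hs
      exact hg0 s (le_of_lt hs)
    · exact Filter.Eventually.of_forall fun s hs => hs.1
  have hI : ∫ s in (0:ℝ)..t, g (t - s) • f s = (∫ s in (0:ℝ)..t, g (t - s)) • f t -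
      ∫ s in (0:ℝ)..t, g (t - s) • (f t - f s) := by
    rw [← intervalIntegral.integral_smul_const, ← intervalIntegral.integral_sub]
    · congr 1
      ext s
      rw [smul_sub, sub_sub_cancel]
    · exact (hgt.smul continuousOn_const).intervalIntegrable
    · exact (hgt.smul (by fun_prop)).intervalIntegrable
  have hA : ‖∫ s in (0:ℝ)..t, g (t - s) • (f t - f s)‖ ≤
      ∫ s in (0:ℝ)..t, g (t - s) * ‖f t - f s‖ := by
    refine (intervalIntegral.norm_integral_le_integral_norm ht).trans (le_of_eq ?_)
    refine intervalIntegral.integral_congr fun s hs => ?_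
    rw [Set.uIcc_of_le ht] at hs
    simp only [norm_smul, Real.norm_eq_abs, abs_of_nonneg (hnn s hs)]
  have hq : ∀ c : ℝ, 0 ≤ (∫ s in (0:ℝ)..t, g (t - s)) * (c * c) +
      (-2 * ∫ s in (0:ℝ)..t, g (t - s) * ‖f t - f s‖) * c +
      ∫ s in (0:ℝ)..t, g (t - s) * ‖f t - f s‖ ^ 2 := by
    intro c
    have h0 : 0 ≤ ∫ s in (0:ℝ)..t, g (t - s) * (c - ‖f t - f s‖) ^ 2 :=
      intervalIntegral.integral_nonneg ht fun s hs => mul_nonneg (hnn s hs) (by positivity)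
    have h1 : ∫ s in (0:ℝ)..t, g (t - s) * (c - ‖f t - f s‖) ^ 2 =
        ∫ s in (0:ℝ)..t, (g (t - s) * (c * c) + (g (t - s) * ‖f t - f s‖) * (-2 * c) +
          g (t - s) * ‖f t - f s‖ ^ 2) := by
      congr 1
      ext s
      ring
    rw [h1, intervalIntegral.integral_add, intervalIntegral.integral_add,
      intervalIntegral.integral_mul_const, intervalIntegral.integral_mul_const] at h0
    · linarith
    · exact hcont _ (by fun_prop)
    · exact (hcont _ (by fun_prop)).mul_const _
    · exact (hcont _ (by fun_prop)).add ((hcont _ (by fun_prop)).mul_const _)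
    · exact hcont _ (by fun_prop)
  have hd := discrim_le_zero hq
  rw [hI]
  rw [discrim] at hd
  generalize (∫ s in (0:ℝ)..t, g (t - s) * ‖f t - f s‖ ^ 2) = K at *
  generalize (∫ s in (0:ℝ)..t, g (t - s) * ‖f t - f s‖) = A at *
  generalize (∫ s in (0:ℝ)..t, g (t - s) • (f t - f s)) = J at *
  generalize (∫ s in (0:ℝ)..t, g (t - s)) = G at *
  have hJ : ‖J‖ ^ 2 ≤ (1 - l) * K := by
    have h1 : ‖J‖ ^ 2 ≤ A ^ 2 := pow_le_pow_left₀ (norm_nonneg _) hA 2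
    have h2 : G * K ≤ (1 - l) * K := mul_le_mul_of_nonneg_right hG1 hK0
    nlinarith
  have hG2 : G ^ 2 * ‖f t‖ ^ 2 ≤ (1 - l) ^ 2 * ‖f t‖ ^ 2 := by gcongr
  have hpar : ‖G • f t - J‖ ^ 2 ≤ 2 * (G ^ 2 * ‖f t‖ ^ 2) + 2 * ‖J‖ ^ 2 := by
    have := parallelogram_law_with_norm ℝ (G • f t) J
    have h2 : ‖G • f t‖ ^ 2 = G ^ 2 * ‖f t‖ ^ 2 := by
      rw [norm_smul, mul_pow, Real.norm_eq_abs, sq_abs]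
    nlinarith [sq_nonneg ‖G • f t + J‖]
  have hin : -⟪G • f t - J, J⟫ ≤ ‖G • f t - J‖ * ‖J‖ := by
    have := abs_real_inner_le_norm (G • f t - J) J
    linarith [neg_abs_le ⟪G • f t - J, J⟫]
  have hY : ‖G • f t - J‖ * ‖J‖ ≤ δ * ‖G • f t - J‖ ^ 2 + 1 / (4 * δ) * ‖J‖ ^ 2 := by
    have : δ * ‖G • f t - J‖ ^ 2 + 1 / (4 * δ) * ‖J‖ ^ 2 - ‖G • f t - J‖ * ‖J‖ =
      (2 * δ * ‖G • f t - J‖ - ‖J‖) ^ 2 / (4 * δ) := by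
      field_simp
      ring
    have h2 : 0 ≤ (2 * δ * ‖G • f t - J‖ - ‖J‖) ^ 2 / (4 * δ) := by positivity
    linarith
  calc _ ≤ δ * ‖G • f t - J‖ ^ 2 + 1 / (4 * δ) * ‖J‖ ^ 2 := hin.trans hY
    _ ≤ δ * (2 * ((1 - l) ^ 2 * ‖f t‖ ^ 2) + 2 * ((1 - l) * K)) +
        1 / (4 * δ) * ((1 - l) * K) := by
      gcongr
      linarith
    _ = _ := by ring
end

section
/- Let t₀ ∈ ℝ, let α₁, α₂, M, k₅ be positive constants, let E, L : [t₀,∞) → ℝ be differentiable with E(t) ≥ 0 and α₁·L(t) ≤ E(t) ≤ α₂·L(t) for all t ≥ t₀, and let ξ : [t₀,∞) → ℝ be differentiable, nonincreasing, with ξ(t) > 0 for all t ≥ t₀. Suppose ξ(t)·L′(t) + 2k₅·E′(t) ≤ −M·ξ(t)·E(t) for all t ≥ t₀. Then there exist constants K > 0 and k > 0 such that E(t) ≤ K·exp(−k·∫_{t₀}^{t} ξ(s) ds) for all t ≥ t₀. -/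
open intervalIntegral

/-- Abstract form of the concluding argument of the general decay theorem:
if `α₁L ≤ E ≤ α₂L`, `E ≥ 0`, `ξ > 0` differentiable nonincreasing, and
`ξ·L′ + 2k₅·E′ ≤ −M·ξ·E` on `[t₀,∞)`, then there are `K, k > 0` with
`E(t) ≤ K·exp(−k∫_{t₀}^t ξ(s) ds)` for all `t ≥ t₀`. -/
theorem general_decay (t₀ α₁ α₂ M k₅ : ℝ) (hα₁ : 0 < α₁) (hα₂ : 0 < α₂)
    (hM : 0 < M) (hk₅ : 0 < k₅)
    (E L : ℝ → ℝ)
    (hEdiff : ∀ t, t₀ ≤ t → DifferentiableAt ℝ E t)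
    (hLdiff : ∀ t, t₀ ≤ t → DifferentiableAt ℝ L t)
    (hE0 : ∀ t, t₀ ≤ t → 0 ≤ E t)
    (hEL : ∀ t, t₀ ≤ t → α₁ * L t ≤ E t ∧ E t ≤ α₂ * L t)
    (ξ : ℝ → ℝ) (hξdiff : ∀ t, t₀ ≤ t → DifferentiableAt ℝ ξ t)
    (hξanti : AntitoneOn ξ (Set.Ici t₀)) (hξpos : ∀ t, t₀ ≤ t → 0 < ξ t)
    (hineq : ∀ t, t₀ ≤ t → ξ t * deriv L t + 2 * k₅ * deriv E t ≤ -M * ξ t * E t) :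
    ∃ K k : ℝ, 0 < K ∧ 0 < k ∧
      ∀ t, t₀ ≤ t → E t ≤ K * Real.exp (-k * ∫ s in t₀..t, ξ s) := by
  have hL0 : ∀ t, t₀ ≤ t → 0 ≤ L t := fun t ht =>
    nonneg_of_mul_nonneg_right ((hE0 t ht).trans (hEL t ht).2) hα₂
  have hξ0 := hξpos t₀ le_rfl
  obtain ⟨c, hc⟩ : ∃ c, c = ξ t₀ / α₁ + 2 * k₅ := ⟨_, rfl⟩
  have hcpos : 0 < c := by rw [hc]; positivity
  obtain ⟨η, hη⟩ : ∃ η : ℝ → ℝ, η = fun s => ξ (max s t₀) := ⟨_, rfl⟩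
  have hηeq : ∀ t, t₀ ≤ t → η t = ξ t := fun t ht => by rw [hη]; simp [max_eq_left ht]
  have hηc : Continuous η := by
    rw [hη, continuous_iff_continuousAt]
    intro s
    exact ContinuousAt.comp (f := fun s => max s t₀) (g := ξ)
      (hξdiff _ (le_max_right _ _)).continuousAt (by fun_prop)
  have hI : ∀ t, HasDerivAt (fun t => ∫ s in t₀..t, η s) (η t) t := fun t =>
    intervalIntegral.integral_hasDerivAt_right (hηc.intervalIntegrable _ _)
      (hηc.stronglyMeasurableAtFilter _ _) hηc.continuousAt
  obtain ⟨H, hH⟩ : ∃ H : ℝ → ℝ, H = fun t => ξ t * L t + 2 * k₅ * E t := ⟨_, rfl⟩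
  have hHd : ∀ t, t₀ ≤ t → HasDerivAt H
      (deriv ξ t * L t + ξ t * deriv L t + 2 * k₅ * deriv E t) t := fun t ht => by
    rw [hH]
    exact ((hξdiff t ht).hasDerivAt.mul (hLdiff t ht).hasDerivAt).add
      ((hEdiff t ht).hasDerivAt.const_mul (2 * k₅))
  have hHE : ∀ t, t₀ ≤ t → H t ≤ c * E t := fun t ht => by
    have h1 : ξ t ≤ ξ t₀ := hξanti Set.self_mem_Ici ht ht
    have h2 : L t ≤ E t / α₁ := by
      rw [le_div_iff₀ hα₁]; linarith [(hEL t ht).1]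
    have h3 : ξ t * L t ≤ ξ t₀ * (E t / α₁) := mul_le_mul h1 h2 (hL0 t ht) hξ0.le
    have h4 : c * E t = ξ t₀ * (E t / α₁) + 2 * k₅ * E t := by rw [hc]; ring
    rw [hH, h4]
    simpa using h3
  have hEH : ∀ t, t₀ ≤ t → 2 * k₅ * E t ≤ H t := fun t ht => by
    rw [hH]
    have := mul_nonneg (hξpos t ht).le (hL0 t ht)
    simpa using this
  have hGd : ∀ t, t₀ ≤ t → HasDerivAt (fun t => H t * Real.exp (M / c * ∫ s in t₀..t, η s))
      ((deriv ξ t * L t + ξ t * deriv L t + 2 * k₅ * deriv E t)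
          * Real.exp (M / c * ∫ s in t₀..t, η s)
        + H t * (Real.exp (M / c * ∫ s in t₀..t, η s) * (M / c * η t))) t := fun t ht =>
    (hHd t ht).mul ((hI t).const_mul (M / c)).exp
  have hanti : AntitoneOn (fun t => H t * Real.exp (M / c * ∫ s in t₀..t, η s))
      (Set.Ici t₀) := by
    apply antitoneOn_of_deriv_nonpos (convex_Ici t₀)
    · exact fun t ht => (hGd t ht).continuousAt.continuousWithinAt
    · intro t ht
      rw [interior_Ici] at ht
      exact (hGd t (le_of_lt ht)).differentiableAt.differentiableWithinAt
    · intro t ht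
      rw [interior_Ici] at ht
      have ht' : t₀ ≤ t := le_of_lt ht
      rw [(hGd t ht').deriv, hηeq t ht']
      have hd : deriv ξ t ≤ 0 := by
        rw [← derivWithin_of_mem_nhds (Ici_mem_nhds ht)]
        exact hξanti.derivWithin_nonpos
      have h1 := mul_nonneg (neg_nonneg.2 hd) (hL0 t ht')
      have h2 : M / c * ξ t * H t ≤ M / c * ξ t * (c * E t) :=
        mul_le_mul_of_nonneg_left (hHE t ht')
          (mul_nonneg (div_pos hM hcpos).le (hξpos t ht').le)
      have h3 : M / c * ξ t * (c * E t) = M * ξ t * E t := by field_simp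
      have h4 := hineq t ht'
      have h5 : deriv ξ t * L t + ξ t * deriv L t + 2 * k₅ * deriv E t
          + M / c * ξ t * H t ≤ 0 := by linarith
      have h6 := mul_nonpos_of_nonpos_of_nonneg h5
        (Real.exp_pos (M / c * ∫ s in t₀..t, η s)).le
      linarith
  have hH0 : 0 ≤ H t₀ := (mul_nonneg (by positivity) (hE0 t₀ le_rfl)).trans (hEH t₀ le_rfl)
  refine ⟨(H t₀ + 1) / (2 * k₅), M / c, by positivity, by positivity, fun t ht => ?_⟩
  have hint : ∫ s in t₀..t, ξ s = ∫ s in t₀..t, η s := by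
    apply intervalIntegral.integral_congr
    intro s hs
    rw [Set.uIcc_of_le ht] at hs
    exact (hηeq s hs.1).symm
  rw [hint]
  have h1 := hanti Set.self_mem_Ici ht ht
  simp only [intervalIntegral.integral_same, mul_zero, Real.exp_zero, mul_one] at h1
  have h2 := hEH t ht
  rw [neg_mul, Real.exp_neg, ← div_eq_mul_inv, le_div_iff₀ (Real.exp_pos _),
    le_div_iff₀ (by positivity)]
  have h3 := mul_le_mul_of_nonneg_right h2 (Real.exp_pos (M / c * ∫ s in t₀..t, η s)).le
  linarith
end
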